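/- Let γ=(B,M,S,A,Â) be a market with middlemen and γ*=(B,S,A*) the associated two-sided assignment market. If μ is an optimal matching for γ (i.e. its value attains v_γ(N)), then the induced matching μ* is an optimal matching for γ* (i.e. its value attains w_{γ*}(B∪S)). -/

import Mathlib

/-!
Matching markets with middlemen (Atay, Bahel, Solymosi).

Players are of three sorts: buyers `B`, middlemen `M`, sellers `S`
(three disjoint nonempty finite types); the player set is `Player B M S = B ⊕ M ⊕ S`.
An (functional representation of a) `T`-matching assigns to each buyer either nothing
(the buyer is single), a seller (direct trade), or a middleman together with a seller
(mediated trade); distinct buyers get distinct sellers, and all agents involved lie in `T`.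
A middleman may mediate several trades.
-/

open scoped Classical

noncomputable section

/-- The set of players of a market with middlemen: buyers `B`, middlemen `M`, sellers `S`. -/
abbrev Player (B M S : Type*) := B ⊕ M ⊕ S

/-- Functional representation of a matching in the market with middlemen: each buyer is
unmatched (`none`), matched directly to a seller (`some (none, k)`), or matched to a seller
through a middleman (`some (some j, k)`). -/
abbrev MMatch (B M S : Type*) := B → Option (Option M × S)

namespace Middlemen

variable {B M S : Type*}

/-- A buyer as a player. -/
def buyer (i : B) : Player B M S := Sum.inl i

/-- A middleman as a player. -/
def mid (j : M) : Player B M S := Sum.inr (Sum.inl j)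

/-- A seller as a player. -/
def seller (k : S) : Player B M S := Sum.inr (Sum.inr k)

/-- `f` is a `T`-matching in the market with middlemen: every basic coalition used by `f`
is contained in `T` and no seller is matched to two distinct buyers.  (Buyers, middlemen
and sellers of `T` not appearing in any trade are singletons of the matching.) -/
def IsMatching (T : Finset (Player B M S)) (f : MMatch B M S) : Prop :=
  (∀ i o k, f i = some (o, k) →
      buyer i ∈ T ∧ seller k ∈ T ∧ ∀ j, o = some j → mid j ∈ T) ∧
  (∀ i i' o o' k, f i = some (o, k) → f i' = some (o', k) → i = i')

variable [Fintype B] [Fintype M] [Fintype S]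

/-- The value `Σ_{(i,k)∈μ} a_{ik} + Σ_{(i,j,k)∈μ} â_{ijk}` of a matching in the market
with middlemen with direct-trade surplus matrix `A` and mediated-trade surpluses `Ah`. -/
def mval (A : B → S → ℝ) (Ah : B → M → S → ℝ) (f : MMatch B M S) : ℝ :=
  ∑ i, (match f i with
    | none => 0
    | some (none, k) => A i k
    | some (some j, k) => Ah i j k)

/-- The TU game `v_γ` associated with the market with middlemen `γ = (B,M,S,A,Ah)`:
the worth of a coalition `T` is the maximal value of a `T`-matching. -/
def vGame (A : B → S → ℝ) (Ah : B → M → S → ℝ) (T : Finset (Player B M S)) : ℝ :=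
  sSup { r | ∃ f : MMatch B M S, IsMatching T f ∧ r = mval A Ah f }

/-- `g` is a matching of the coalition `R` in a two-sided assignment market. -/
def IsMatching2 (R : Finset (B ⊕ S)) (g : B → Option S) : Prop :=
  (∀ i k, g i = some k → Sum.inl i ∈ R ∧ Sum.inr k ∈ R) ∧
  (∀ i i' k, g i = some k → g i' = some k → i = i')

/-- The value of a two-sided matching with valuation matrix `As`. -/
def m2val (As : B → S → ℝ) (g : B → Option S) : ℝ :=
  ∑ i, (match g i with
    | none => 0
    | some k => As i k)

/-- The assignment game `w_{γ*}` of the two-sided assignment market `(B,S,As)`. -/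
def wGame (As : B → S → ℝ) (R : Finset (B ⊕ S)) : ℝ :=
  sSup { r | ∃ g : B → Option S, IsMatching2 R g ∧ r = m2val As g }

/-- The matrix `A*` of the associated two-sided assignment market:
`a*_{ik} = max_{j ∈ M} â_{ijk}`. -/
def Astar [Nonempty M] (Ah : B → M → S → ℝ) (i : B) (k : S) : ℝ :=
  Finset.univ.sup' Finset.univ_nonempty fun j => Ah i j k

/-- The two-sided matching `μ*` induced by a matching `μ` of the market with middlemen:
keep all matched buyer–seller pairs (dropping the middlemen). -/
def star (f : MMatch B M S) : B → Option S := fun i => (f i).map Prod.snd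

/-- `m(i,k)`: the lowest-indexed middleman `j` maximizing `â_{ijk}`. -/
def bestMid [Nonempty M] [LinearOrder M] (Ah : B → M → S → ℝ) (i : B) (k : S) : M :=
  (Finset.univ.filter fun j => ∀ j' : M, Ah i j' k ≤ Ah i j k).min' (by
    obtain ⟨j, -, hj⟩ := Finset.exists_max_image (Finset.univ : Finset M)
      (fun j => Ah i j k) Finset.univ_nonempty
    exact ⟨j, Finset.mem_filter.mpr ⟨Finset.mem_univ _, fun j' => hj j' (Finset.mem_univ _)⟩⟩)

/-- The matching `σ^△` of the market with middlemen induced by a two-sided matching `σ`: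
each matched pair `{i,k}` of `σ` trades through the best middleman `m(i,k)`
(and every other middleman is a singleton). -/
def triangle [Nonempty M] [LinearOrder M] (Ah : B → M → S → ℝ) (g : B → Option S) :
    MMatch B M S :=
  fun i => (g i).map fun k => (some (bestMid Ah i k), k)

/-- The core of a TU game on the finite player set `P`. -/
def core {P : Type*} [Fintype P] (v : Finset P → ℝ) : Set (P → ℝ) :=
  { x | ∑ t, x t = v Finset.univ ∧ ∀ T : Finset P, v T ≤ ∑ t ∈ T, x t }

/-- Augment a payoff vector of the two-sided market with zero payoffs to all middlemen. -/
def aug (xz : B ⊕ S → ℝ) : Player B M S → ℝ := fun t =>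
  match t with
  | Sum.inl i => xz (Sum.inl i)
  | Sum.inr (Sum.inl _) => 0
  | Sum.inr (Sum.inr k) => xz (Sum.inr k)

/-- Restrict a payoff vector of the market with middlemen to the buyers and sellers. -/
def restrictBS (X : Player B M S → ℝ) : B ⊕ S → ℝ := fun t =>
  match t with
  | Sum.inl i => X (buyer i)
  | Sum.inr k => X (seller k)

/-- The set `T ∩ (B ∪ S)` of buyers and sellers of a coalition `T`. -/
def bsPart (T : Finset (Player B M S)) : Finset (B ⊕ S) :=
  Finset.univ.filter fun t =>
    match t with
    | Sum.inl i => buyer i ∈ T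
    | Sum.inr k => (seller k : Player B M S) ∈ T

/-- The coalition `R ∪ M` consisting of the buyers and sellers of `R` together with
all middlemen. -/
def withAllMid (R : Finset (B ⊕ S)) : Finset (Player B M S) :=
  Finset.univ.filter fun t =>
    match t with
    | Sum.inl i => Sum.inl i ∈ R
    | Sum.inr (Sum.inl _) => True
    | Sum.inr (Sum.inr k) => Sum.inr k ∈ R

end Middlemen

namespace Middlemen

/-!
Forgetting the middlemen of `μ` can only raise its value, as `A*` dominates both `A` and `Â`.
Conversely, letting every pair of a two-sided matching trade through a best middleman gives a
matching with middlemen of the same value.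
For an optimal `μ` the resulting inequalities close up:
`value μ* ≤ w_{γ*} ≤ v_γ = value μ ≤ value μ*`.
-/

section Matchings

variable {B M S : Type*} {T : Finset (Player B M S)} {f : MMatch B M S}

lemma star_eq_some_iff {i : B} {k : S} : star f i = some k ↔ ∃ o, f i = some (o, k) := by
  simp [star]

variable [Fintype B] [Fintype S]

lemma inl_mem_bsPart {i : B} : Sum.inl i ∈ bsPart T ↔ buyer i ∈ T := by
  simp [bsPart]

lemma inr_mem_bsPart {k : S} : Sum.inr k ∈ bsPart T ↔ seller k ∈ T := by
  simp [bsPart]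

lemma bsPart_univ [Fintype M] : bsPart (Finset.univ : Finset (Player B M S)) = Finset.univ := by
  ext (i | k)
  · simp [inl_mem_bsPart]
  · simp [inr_mem_bsPart]

lemma IsMatching.isMatching2_star (hf : IsMatching T f) : IsMatching2 (bsPart T) (star f) := by
  simp only [IsMatching2, star_eq_some_iff, inl_mem_bsPart, inr_mem_bsPart]
  constructor
  · rintro i k ⟨o, hik⟩
    obtain ⟨hi, hk, -⟩ := hf.1 i o k hik
    exact ⟨hi, hk⟩
  · rintro i i' k ⟨o, hik⟩ ⟨o', hi'k⟩
    exact hf.2 i i' o o' k hik hi'k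

lemma IsMatching2.isMatching_of_star (hT : ∀ j, mid j ∈ T)
    (hf : IsMatching2 (bsPart T) (star f)) : IsMatching T f := by
  simp only [IsMatching2, star_eq_some_iff, inl_mem_bsPart, inr_mem_bsPart] at hf
  constructor
  · intro i o k hik
    obtain ⟨hi, hk⟩ := hf.1 i k ⟨o, hik⟩
    exact ⟨hi, hk, fun j _ => hT j⟩
  · intro i i' o o' k hik hi'k
    exact hf.2 i i' k ⟨o, hik⟩ ⟨o', hi'k⟩

end Matchings

section BestMiddleman

variable {B M S : Type*} [Fintype M] [Nonempty M] {Ah : B → M → S → ℝ}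

lemma le_Astar (i : B) (j : M) (k : S) : Ah i j k ≤ Astar Ah i k :=
  Finset.le_sup' (fun j => Ah i j k) (Finset.mem_univ j)

lemma mval_le_m2val_star [Fintype B] {A : B → S → ℝ} {f : MMatch B M S}
    (hA : ∀ i k, A i k ≤ Astar Ah i k) : mval A Ah f ≤ m2val (Astar Ah) (star f) := by
  refine Finset.sum_le_sum fun i _ => ?_
  rcases hi : f i with _ | ⟨_ | j, k⟩
  · simp [star, hi]
  · simpa [star, hi] using hA i k
  · simpa [star, hi] using le_Astar i j k

variable [LinearOrder M]

lemma Ah_bestMid (i : B) (k : S) : Ah i (bestMid Ah i k) k = Astar Ah i k := by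
  have hmax : ∀ j, Ah i j k ≤ Ah i (bestMid Ah i k) k :=
    (Finset.mem_filter_univ (bestMid Ah i k)).mp (Finset.min'_mem _ _)
  exact le_antisymm (le_Astar i _ k) (Finset.sup'_le _ _ fun j _ => hmax j)

lemma star_triangle (g : B → Option S) : star (triangle Ah g) = g := by
  funext i
  simp [star, triangle, Function.comp_def]

lemma mval_triangle [Fintype B] (A : B → S → ℝ) (g : B → Option S) :
    mval A Ah (triangle Ah g) = m2val (Astar Ah) g := by
  refine Finset.sum_congr rfl fun i _ => ?_
  rcases hi : g i with _ | k
  · simp [triangle, hi]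
  · simp [triangle, hi, Ah_bestMid]

end BestMiddleman

section Games

lemma le_sSup_values {α : Type*} [Finite α] {p : α → Prop} (value : α → ℝ) {a : α} (ha : p a) :
    value a ≤ sSup {r | ∃ a, p a ∧ r = value a} := by
  refine le_csSup ((Set.finite_range value).bddAbove.mono ?_) ⟨a, ha, rfl⟩
  rintro _ ⟨b, -, rfl⟩
  exact ⟨b, rfl⟩

variable {B M S : Type*} [Fintype B] {A : B → S → ℝ} {Ah : B → M → S → ℝ}
  {T : Finset (Player B M S)} {f : MMatch B M S}

lemma IsMatching.mval_le_vGame [Finite M] [Finite S] (hf : IsMatching T f) :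
    mval A Ah f ≤ vGame A Ah T :=
  le_sSup_values (mval A Ah) hf

lemma IsMatching2.m2val_le_wGame [Finite S] {As : B → S → ℝ} {R : Finset (B ⊕ S)}
    {g : B → Option S} (hg : IsMatching2 R g) : m2val As g ≤ wGame As R :=
  le_sSup_values (m2val As) hg

variable [Fintype M] [Nonempty M] [Fintype S]

lemma wGame_bsPart_le_vGame (hT : ∀ j, mid j ∈ T) :
    wGame (Astar Ah) (bsPart T) ≤ vGame A Ah T := by
  -- `triangle` breaks ties between best middlemen by an order on `M`; any order will do.
  let _ : LinearOrder M := linearOrderOfSTO WellOrderingRel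
  have hnone : IsMatching2 (bsPart T) fun _ => none := by simp [IsMatching2]
  refine csSup_le ⟨_, _, hnone, rfl⟩ ?_
  rintro _ ⟨g, hg, rfl⟩
  have htriangle : IsMatching T (triangle Ah g) :=
    IsMatching2.isMatching_of_star hT (by rwa [star_triangle])
  calc
    m2val (Astar Ah) g = mval A Ah (triangle Ah g) := (mval_triangle A g).symm
    _ ≤ vGame A Ah T := htriangle.mval_le_vGame

theorem star_optimal_general (hA : ∀ i k, A i k ≤ Astar Ah i k) (hT : ∀ j, mid j ∈ T)
    (hf : IsMatching T f) (hopt : mval A Ah f = vGame A Ah T) :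
    IsMatching2 (bsPart T) (star f) ∧
      m2val (Astar Ah) (star f) = wGame (Astar Ah) (bsPart T) := by
  have hstar := hf.isMatching2_star
  refine ⟨hstar, le_antisymm hstar.m2val_le_wGame ?_⟩
  calc
    wGame (Astar Ah) (bsPart T) ≤ vGame A Ah T := wGame_bsPart_le_vGame hT
    _ = mval A Ah f := hopt.symm
    _ ≤ m2val (Astar Ah) (star f) := mval_le_m2val_star hA

end Games

/-- if `μ` is an optimal matching of the market with middlemen `γ`, then
`μ*` is an optimal matching of the associated two-sided assignment market `γ*`. -/
theorem star_optimal
    {B M S : Type*} [Fintype B] [Fintype M] [Fintype S]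
    [Nonempty B] [Nonempty M] [Nonempty S]
    (A : B → S → ℝ) (Ah : B → M → S → ℝ)
    (hA : ∀ i k, 0 ≤ A i k) (hAh : ∀ i j k, A i k ≤ Ah i j k)
    (f : MMatch B M S) (hf : IsMatching Finset.univ f)
    (hopt : mval A Ah f = vGame A Ah Finset.univ) :
    IsMatching2 Finset.univ (star f) ∧
      m2val (Astar Ah) (star f) = wGame (Astar Ah) Finset.univ := by
  have hAstar (i : B) (k : S) : A i k ≤ Astar Ah i k :=
    (hAh i (Classical.arbitrary M) k).trans (le_Astar i _ k)
  simpa only [bsPart_univ] using star_optimal_general hAstar (fun _ => Finset.mem_univ _) hf hopt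

end Middlemen
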